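/- Let F: ℝ^n_+ → ℝ be bounded on ℝ^n_+ and completely monotone on the interior of ℝ^n_+ (i.e., (−1)^{|β|} ∂^β F ≥ 0 for all multi-indices β). Then there exists a unique finite nonnegative Borel measure μ on ℝ^n_+ with F(p) = ∫_{ℝ^n_+} e^{−p·x} dμ(x) for all p ∈ ℝ^n_+. -/

import Mathlib

open Real MeasureTheory

/-- Partial derivative in the `i`-th coordinate direction. -/
noncomputable def pderiv' (n : ℕ) (i : Fin n) (f : (Fin n → ℝ) → ℝ) :
    (Fin n → ℝ) → ℝ :=
  fun p => fderiv ℝ f p (Pi.single i 1)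

open Filter Topology

/-- Functions on the closed orthant that are continuous there and completely monotone on the
open orthant. -/
structure IsCompletelyMonotone (n : ℕ) (G : (Fin n → ℝ) → ℝ) : Prop where
  continuousOn : ContinuousOn G {p : Fin n → ℝ | ∀ i, 0 ≤ p i}
  contDiffOn : ContDiffOn ℝ (⊤ : ℕ∞) G {p : Fin n → ℝ | ∀ i, 0 < p i}
  sign : ∀ l : List (Fin n), ∀ p : Fin n → ℝ, (∀ i, 0 < p i) →
    0 ≤ (-1 : ℝ) ^ l.length * (l.foldr (pderiv' n) G) p

section CompletelyMonotone

variable {n : ℕ}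

lemma isOpen_openOrthant : IsOpen {p : Fin n → ℝ | ∀ i, 0 < p i} := by
  simp only [Set.ofPred_forall]
  exact isOpen_iInter_of_finite fun i => isOpen_lt continuous_const (continuous_apply i)

lemma contDiffOn_foldr_pderiv' {G : (Fin n → ℝ) → ℝ}
    (hG : ContDiffOn ℝ (⊤ : ℕ∞) G {p : Fin n → ℝ | ∀ i, 0 < p i}) (l : List (Fin n)) :
    ContDiffOn ℝ (⊤ : ℕ∞) (l.foldr (pderiv' n) G) {p : Fin n → ℝ | ∀ i, 0 < p i} := by
  induction l with
  | nil => exact hG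
  | cons i l ih =>
    exact (ih.fderiv_of_isOpen isOpen_openOrthant (by simp)).clm_apply contDiffOn_const

lemma foldr_pderiv'_comp_add (G : (Fin n → ℝ) → ℝ) (v : Fin n → ℝ) (l : List (Fin n)) :
    l.foldr (pderiv' n) (fun p => G (p + v)) = fun p => l.foldr (pderiv' n) G (p + v) := by
  induction l with
  | nil => rfl
  | cons i l ih =>
    funext p
    simp only [List.foldr_cons, ih]
    simp only [pderiv', fderiv_comp_add_right]

lemma foldr_pderiv'_sub {G H : (Fin n → ℝ) → ℝ}
    (hG : ContDiffOn ℝ (⊤ : ℕ∞) G {p : Fin n → ℝ | ∀ i, 0 < p i})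
    (hH : ContDiffOn ℝ (⊤ : ℕ∞) H {p : Fin n → ℝ | ∀ i, 0 < p i}) (l : List (Fin n)) :
    Set.EqOn (l.foldr (pderiv' n) (fun p => G p - H p))
      (fun p => l.foldr (pderiv' n) G p - l.foldr (pderiv' n) H p)
      {p : Fin n → ℝ | ∀ i, 0 < p i} := by
  induction l with
  | nil => exact fun p _ => rfl
  | cons i l ih =>
    intro p hp
    have hnhds := isOpen_openOrthant.mem_nhds hp
    have hd : ∀ K : (Fin n → ℝ) → ℝ,
        ContDiffOn ℝ (⊤ : ℕ∞) K {p : Fin n → ℝ | ∀ i, 0 < p i} →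
        DifferentiableAt ℝ (l.foldr (pderiv' n) K) p := fun K hK =>
      ((contDiffOn_foldr_pderiv' hK l).contDiffAt hnhds).differentiableAt (by simp)
    simp only [List.foldr_cons]
    simp only [pderiv']
    rw [(ih.eventuallyEq_of_mem hnhds).fderiv_eq, fderiv_fun_sub (hd G hG) (hd H hH)]
    rfl

lemma add_single_pos {p : Fin n → ℝ} (hp : ∀ i, 0 < p i) (i : Fin n) {h : ℝ} (hh : 0 ≤ h) :
    ∀ j, 0 < (p + Pi.single i h : Fin n → ℝ) j := fun j =>
  add_pos_of_pos_of_nonneg (hp j) ((Pi.single_nonneg.2 hh : (0 : Fin n → ℝ) ≤ Pi.single i h) j)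

lemma le_of_pderiv'_nonpos {g : (Fin n → ℝ) → ℝ}
    (hg : ContDiffOn ℝ (⊤ : ℕ∞) g {p : Fin n → ℝ | ∀ i, 0 < p i}) (i : Fin n)
    (hneg : ∀ p : Fin n → ℝ, (∀ i, 0 < p i) → pderiv' n i g p ≤ 0)
    {p : Fin n → ℝ} (hp : ∀ i, 0 < p i) {h : ℝ} (hh : 0 ≤ h) :
    g (p + Pi.single i h) ≤ g p := by
  have hder : ∀ s : ℝ, 0 ≤ s → HasDerivAt (fun s : ℝ => g (p + Pi.single i s))
      (pderiv' n i g (p + Pi.single i s)) s := by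
    intro s hs
    have h1 : HasDerivAt (fun s : ℝ => (p + Pi.single i s : Fin n → ℝ))
        (Pi.single i (1 : ℝ)) s :=
      (hasDerivAt_single i s).const_add p
    have h2 := ((hg.contDiffAt (isOpen_openOrthant.mem_nhds
      (add_single_pos hp i hs))).differentiableAt (by simp)).hasFDerivAt
    exact h2.comp_hasDerivAt s h1
  have hanti : AntitoneOn (fun s : ℝ => g (p + Pi.single i s)) (Set.Ici 0) := by
    apply antitoneOn_of_deriv_nonpos (convex_Ici 0)
    · exact fun s hs => (hder s hs).continuousAt.continuousWithinAt
    · intro s hs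
      exact (hder s (interior_subset hs)).differentiableAt.differentiableWithinAt
    · intro s hs
      rw [(hder s (interior_subset hs)).deriv]
      exact hneg _ (add_single_pos hp i (interior_subset hs))
  simpa using hanti (Set.mem_Ici.2 le_rfl) (Set.mem_Ici.2 hh) hh

namespace IsCompletelyMonotone

variable {G : (Fin n → ℝ) → ℝ}

lemma comp_add_single (hG : IsCompletelyMonotone n G) (i : Fin n) {h : ℝ} (hh : 0 ≤ h) :
    IsCompletelyMonotone n (fun p => G (p + Pi.single i h)) where
  continuousOn := hG.continuousOn.comp (by fun_prop) fun p hp j => by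
    have : 0 ≤ (Pi.single i h : Fin n → ℝ) := Pi.single_nonneg.2 hh
    exact add_nonneg (hp j) (this j)
  contDiffOn := hG.contDiffOn.comp (by fun_prop) fun p hp => add_single_pos hp i hh
  sign l p hp := by
    rw [foldr_pderiv'_comp_add]
    exact hG.sign l _ (add_single_pos hp i hh)

lemma sub_comp_add_single (hG : IsCompletelyMonotone n G) (i : Fin n) {h : ℝ} (hh : 0 ≤ h) :
    IsCompletelyMonotone n (fun p => G p - G (p + Pi.single i h)) where
  continuousOn := hG.continuousOn.sub (hG.comp_add_single i hh).continuousOn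
  contDiffOn := hG.contDiffOn.sub (hG.comp_add_single i hh).contDiffOn
  sign l p hp := by
    rw [foldr_pderiv'_sub hG.contDiffOn (hG.comp_add_single i hh).contDiffOn l hp,
      foldr_pderiv'_comp_add, mul_sub, sub_nonneg]
    refine le_of_pderiv'_nonpos (g := fun p => (-1) ^ l.length * l.foldr (pderiv' n) G p)
      (contDiffOn_const.mul (contDiffOn_foldr_pderiv' hG.contDiffOn l)) i (fun q hq => ?_) hp hh
    have hd : DifferentiableAt ℝ (l.foldr (pderiv' n) G) q :=
      ((contDiffOn_foldr_pderiv' hG.contDiffOn l).contDiffAt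
        (isOpen_openOrthant.mem_nhds hq)).differentiableAt (by simp)
    have hs := hG.sign (i :: l) q hq
    simp only [List.foldr_cons, List.length_cons, pow_succ] at hs
    simp only [pderiv'] at hs ⊢
    rw [fderiv_const_mul hd]
    simp only [smul_apply, smul_eq_mul]
    linarith

lemma apply_zero_nonneg (hG : IsCompletelyMonotone n G) : 0 ≤ G 0 := by
  have hlim : Tendsto (fun s : ℝ => (fun _ : Fin n => s)) (𝓝[>] 0)
      (𝓝[{p : Fin n → ℝ | ∀ i, 0 ≤ p i}] 0) := by
    refine tendsto_nhdsWithin_iff.2 ⟨?_, ?_⟩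
    · exact ((by fun_prop : Continuous fun s : ℝ => (fun _ : Fin n => s)).tendsto 0).mono_left
        nhdsWithin_le_nhds
    · filter_upwards [self_mem_nhdsWithin] with s hs i using le_of_lt hs
  refine ge_of_tendsto ((hG.continuousOn 0 fun _ => le_rfl).tendsto.comp hlim) ?_
  filter_upwards [self_mem_nhdsWithin] with s hs
  simpa using hG.sign [] (fun _ => s) fun _ => hs

end IsCompletelyMonotone

/-- The linear functional on polynomials sending the monomial with exponent `k` to `G (k * h)`. -/
noncomputable def latticeFunctional (n : ℕ) (h : ℝ) (G : (Fin n → ℝ) → ℝ) :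
    MvPolynomial (Fin n) ℝ →ₗ[ℝ] ℝ :=
  (MvPolynomial.basisMonomials (Fin n) ℝ).constr ℝ fun k => G fun i => k i * h

lemma latticeFunctional_monomial (h : ℝ) (G : (Fin n → ℝ) → ℝ) (k : Fin n →₀ ℕ) :
    latticeFunctional n h G (MvPolynomial.monomial k 1) = G fun i => k i * h := by
  exact Module.Basis.constr_basis (MvPolynomial.basisMonomials (Fin n) ℝ) ℝ
    (fun k => G fun i => k i * h) k

lemma latticeFunctional_X_mul (h : ℝ) (G : (Fin n → ℝ) → ℝ) (i : Fin n)
    (P : MvPolynomial (Fin n) ℝ) :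
    latticeFunctional n h G (MvPolynomial.X i * P) =
      latticeFunctional n h (fun p => G (p + Pi.single i h)) P := by
  have : latticeFunctional n h G ∘ₗ LinearMap.mulLeft ℝ (MvPolynomial.X i) =
      latticeFunctional n h (fun p => G (p + Pi.single i h)) := by
    refine (MvPolynomial.basisMonomials (Fin n) ℝ).ext fun k => ?_
    simp only [MvPolynomial.coe_basisMonomials, LinearMap.comp_apply, LinearMap.mulLeft_apply,
      MvPolynomial.X, MvPolynomial.monomial_mul, one_mul, latticeFunctional_monomial]
    congr 1
    funext j
    by_cases hj : j = i
    · subst hj; simp; ring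
    · simp [hj]
  exact LinearMap.congr_fun this P

lemma latticeFunctional_one_sub_X_mul (h : ℝ) (G : (Fin n → ℝ) → ℝ) (i : Fin n)
    (P : MvPolynomial (Fin n) ℝ) :
    latticeFunctional n h G ((1 - MvPolynomial.X i) * P) =
      latticeFunctional n h (fun p => G p - G (p + Pi.single i h)) P := by
  have hsub : latticeFunctional n h (fun p => G p - G (p + Pi.single i h)) =
      latticeFunctional n h G - latticeFunctional n h (fun p => G (p + Pi.single i h)) := by
    refine (MvPolynomial.basisMonomials (Fin n) ℝ).ext fun k => ?_
    simp only [MvPolynomial.coe_basisMonomials, latticeFunctional_monomial, LinearMap.sub_apply]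
  rw [sub_mul, one_mul, map_sub, latticeFunctional_X_mul, hsub, LinearMap.sub_apply]

lemma latticeFunctional_nonneg {h : ℝ} (hh : 0 ≤ h) {G : (Fin n → ℝ) → ℝ}
    (hG : IsCompletelyMonotone n G) (k m : Fin n → ℕ) :
    0 ≤ latticeFunctional n h G
      (∏ i, MvPolynomial.X i ^ k i * (1 - MvPolynomial.X i) ^ m i) := by
  let S : Submonoid (MvPolynomial (Fin n) ℝ) :=
    { carrier := {Q | ∀ P : MvPolynomial (Fin n) ℝ,
        (∀ G, IsCompletelyMonotone n G → 0 ≤ latticeFunctional n h G P) →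
        ∀ G, IsCompletelyMonotone n G → 0 ≤ latticeFunctional n h G (Q * P)}
      one_mem' := fun P hP G hG => by simpa using hP G hG
      mul_mem' := fun {a b} ha hb P hP => by
        simp only [mul_assoc]
        exact ha _ (hb _ hP) }
  have hX : ∀ i, MvPolynomial.X i ∈ S := fun i P hP G hG => by
    rw [latticeFunctional_X_mul]; exact hP _ (hG.comp_add_single i hh)
  have hX' : ∀ i, 1 - MvPolynomial.X i ∈ S := fun i P hP G hG => by
    rw [latticeFunctional_one_sub_X_mul]; exact hP _ (hG.sub_comp_add_single i hh)
  have hmem : ∏ i, MvPolynomial.X i ^ k i * (1 - MvPolynomial.X i) ^ m i ∈ S :=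
    S.prod_mem fun i _ => S.mul_mem (S.pow_mem (hX i) _) (S.pow_mem (hX' i) _)
  have := hmem 1 (fun G hG => ?_) G hG
  · simpa only [mul_one] using this
  · have h1 := latticeFunctional_monomial h G 0
    simp only [Finsupp.coe_zero, Pi.zero_apply, Nat.cast_zero, zero_mul] at h1
    rw [show (1 : MvPolynomial (Fin n) ℝ) = MvPolynomial.monomial 0 1 from rfl, h1]
    exact hG.apply_zero_nonneg

end CompletelyMonotone

section HausdorffMoment

variable {n : ℕ}

lemma abs_prod_sub_prod_le_sum {ι : Type*} (s : Finset ι) (u v : ι → ℝ)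
    (hu : ∀ i, u i ∈ Set.Icc (0 : ℝ) 1) (hv : ∀ i, v i ∈ Set.Icc (0 : ℝ) 1) :
    |∏ i ∈ s, u i - ∏ i ∈ s, v i| ≤ ∑ i ∈ s, |u i - v i| := by
  classical
  induction s using Finset.induction_on with
  | empty => simp
  | insert i s hi ih =>
    rw [Finset.prod_insert hi, Finset.prod_insert hi, Finset.sum_insert hi]
    have hU0 : 0 ≤ ∏ i ∈ s, u i := Finset.prod_nonneg fun i _ => (hu i).1
    have hU1 : ∏ i ∈ s, u i ≤ 1 := Finset.prod_le_one (fun i _ => (hu i).1) fun i _ => (hu i).2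
    calc |u i * ∏ i ∈ s, u i - v i * ∏ i ∈ s, v i|
        = |(u i - v i) * ∏ i ∈ s, u i + v i * (∏ i ∈ s, u i - ∏ i ∈ s, v i)| := by ring_nf
      _ ≤ |u i - v i| * ∏ i ∈ s, u i + v i * |∏ i ∈ s, u i - ∏ i ∈ s, v i| := by
        refine (abs_add_le _ _).trans_eq ?_
        rw [abs_mul, abs_mul, abs_of_nonneg hU0, abs_of_nonneg (hv i).1]
      _ ≤ |u i - v i| * 1 + 1 * ∑ i ∈ s, |u i - v i| := by
        gcongr
        exact (hv i).2
      _ = _ := by ring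

lemma choose_div_choose_mem_Icc {k N : ℕ} (hk : k ≤ N) (a : ℕ) :
    (k.choose a / N.choose a : ℝ) ∈ Set.Icc (0 : ℝ) 1 :=
  ⟨by positivity, div_le_one_of_le₀ (by exact_mod_cast Nat.choose_le_choose a hk) (by positivity)⟩

lemma abs_natSub_div_natSub_sub_div_le {a k N : ℕ} (ha : a < N) (hk : k ≤ N) :
    |((k - a : ℕ) / (N - a : ℕ) - k / N : ℝ)| ≤ a / N := by
  have hN : (0 : ℝ) < N := by exact_mod_cast (Nat.zero_le a).trans_lt ha
  have hNa : (0 : ℝ) < N - a := by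
    have : (a : ℝ) < N := by exact_mod_cast ha
    linarith
  rcases le_total k a with hka | hka
  · have : (k : ℝ) ≤ a := by exact_mod_cast hka
    rw [Nat.sub_eq_zero_of_le hka, Nat.cast_zero, zero_div, zero_sub, abs_neg,
      abs_of_nonneg (by positivity)]
    gcongr
  · rw [Nat.cast_sub hka, Nat.cast_sub ha.le]
    have h1 : (k - a : ℝ) / (N - a) - k / N = -(a / N * ((N - k) / (N - a))) := by
      field_simp
      ring
    have hk' : (k : ℝ) ≤ N := by exact_mod_cast hk
    have hka' : (a : ℝ) ≤ k := by exact_mod_cast hka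
    have h2 : 0 ≤ ((N - k) / (N - a) : ℝ) := div_nonneg (by linarith) hNa.le
    have h3 : ((N - k) / (N - a) : ℝ) ≤ 1 := (div_le_one hNa).2 (by linarith)
    rw [h1, abs_neg, abs_of_nonneg (by positivity)]
    exact mul_le_of_le_one_right (by positivity) h3

lemma eventually_abs_choose_div_choose_sub_pow_le (a : ℕ) {ε : ℝ} (hε : 0 < ε) :
    ∀ᶠ N : ℕ in atTop, ∀ k ≤ N, |(k.choose a / N.choose a - (k / N) ^ a : ℝ)| ≤ ε := by
  induction a generalizing ε with
  | zero => exact Eventually.of_forall fun N k _ => by simpa using hε.le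
  | succ a ih =>
    have hlim : ∀ᶠ N : ℕ in atTop, (a / N : ℝ) ≤ ε / 2 :=
      (tendsto_const_div_atTop_nhds_zero_nat (a : ℝ)).eventually_le_const (half_pos hε)
    filter_upwards [ih (half_pos hε), hlim, eventually_gt_atTop a] with N h1 h2 h3 k hk
    have hchoose : ∀ m : ℕ, (m.choose (a + 1) : ℝ) = m.choose a * (m - a : ℕ) / (a + 1) := by
      intro m
      rw [eq_div_iff (by positivity)]
      exact_mod_cast Nat.choose_succ_right_eq m a
    have hN : (0 : ℝ) < N := by exact_mod_cast (Nat.zero_le a).trans_lt h3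
    have hprod : (k.choose (a + 1) / N.choose (a + 1) : ℝ) =
        k.choose a / N.choose a * ((k - a : ℕ) / (N - a : ℕ)) := by
      rw [hchoose, hchoose, div_div_div_cancel_right₀ (by positivity), mul_div_mul_comm]
    have hx0 : (0 : ℝ) ≤ k / N := by positivity
    have hx1 : (k / N : ℝ) ≤ 1 := (div_le_one hN).2 (by exact_mod_cast hk)
    have hy0 : (0 : ℝ) ≤ (k - a : ℕ) / (N - a : ℕ) := by positivity
    have hy1 : ((k - a : ℕ) / (N - a : ℕ) : ℝ) ≤ 1 :=
      div_le_one_of_le₀ (by exact_mod_cast Nat.sub_le_sub_right hk a) (by positivity)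
    have hb := abs_prod_sub_prod_le_sum Finset.univ
      ![(k.choose a / N.choose a : ℝ), (k - a : ℕ) / (N - a : ℕ)] ![(k / N : ℝ) ^ a, k / N]
      (by simpa [Fin.forall_fin_two] using ⟨choose_div_choose_mem_Icc hk a, hy0, hy1⟩)
      (by simpa [Fin.forall_fin_two] using
        ⟨⟨pow_nonneg hx0 a, pow_le_one₀ hx0 hx1⟩, hx0, hx1⟩)
    simp only [Fin.prod_univ_two, Fin.sum_univ_two, Matrix.cons_val_zero, Matrix.cons_val_one]
      at hb
    rw [hprod, pow_succ]
    linarith [h1 k hk, abs_natSub_div_natSub_sub_div_le h3 hk]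

lemma pow_eq_sum_bernstein {R : Type*} [CommRing R] [Algebra ℝ R] (x : R) {a N : ℕ}
    (ha : a ≤ N) :
    x ^ a = ∑ k : Fin (N + 1), ((N.choose k : ℝ) * ((k : ℕ).choose a / N.choose a : ℝ)) •
      (x ^ (k : ℕ) * (1 - x) ^ (N - k)) := by
  rw [Fin.sum_univ_eq_sum_range (fun k => ((N.choose k : ℝ) * (k.choose a / N.choose a : ℝ)) •
      (x ^ k * (1 - x) ^ (N - k))) (N + 1)]
  obtain ⟨m, rfl⟩ := Nat.exists_eq_add_of_le ha
  rw [add_assoc, Finset.sum_range_add, Finset.sum_eq_zero, zero_add]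
  · have h1 : x ^ a = x ^ a * (x + (1 - x)) ^ m := by simp
    rw [h1, add_pow, Finset.mul_sum]
    refine Finset.sum_congr rfl fun j hj => ?_
    have hj' : j ≤ m := by simpa [Nat.lt_succ_iff] using hj
    have h2 : ((a + m).choose (a + j) : ℝ) * ((a + j).choose a / (a + m).choose a) =
        m.choose j := by
      have h3 := Nat.choose_mul (n := a + m) (k := a + j) (s := a) (by omega)
      simp only [Nat.add_sub_cancel_left] at h3
      have h4 : ((a + m).choose a : ℝ) ≠ 0 := by
        exact_mod_cast (Nat.choose_pos (Nat.le_add_right a m)).ne'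
      rw [← mul_div_assoc, div_eq_iff h4, mul_comm (m.choose j : ℝ)]
      exact_mod_cast h3
    rw [h2, Nat.add_sub_add_left, Nat.cast_smul_eq_nsmul, nsmul_eq_mul, pow_add]
    ring
  · intro k hk
    rw [Nat.choose_eq_zero_of_lt (Finset.mem_range.1 hk)]
    simp

variable (L : MvPolynomial (Fin n) ℝ →ₗ[ℝ] ℝ)

/-- The mass of the `N`-th Bernstein approximation at the grid point `k / N`. -/
noncomputable def bernsteinWeight (N : ℕ) (k : Fin n → Fin (N + 1)) : ℝ :=
  (∏ i, (N.choose (k i) : ℝ)) *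
    L (∏ i, MvPolynomial.X i ^ (k i : ℕ) * (1 - MvPolynomial.X i) ^ (N - k i))

lemma sum_bernsteinWeight_mul {N : ℕ} {a : Fin n → ℕ} (ha : ∀ i, a i ≤ N) :
    L (∏ i, MvPolynomial.X i ^ a i) = ∑ k : Fin n → Fin (N + 1),
      bernsteinWeight L N k * ∏ i, ((k i : ℕ).choose (a i) / N.choose (a i) : ℝ) := by
  simp_rw [fun i => pow_eq_sum_bernstein (MvPolynomial.X i : MvPolynomial (Fin n) ℝ) (ha i)]
  rw [Finset.prod_univ_sum, Fintype.piFinset_univ, map_sum]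
  refine Finset.sum_congr rfl fun k _ => ?_
  rw [Finset.prod_smul, map_smul, Finset.prod_mul_distrib, bernsteinWeight, smul_eq_mul]
  ring

/-- The point `k / N` of the unit cube. -/
noncomputable def gridPoint (N : ℕ) (k : Fin n → Fin (N + 1)) : Fin n → unitInterval :=
  fun i => ⟨(k i : ℕ) / N, unitInterval.div_mem (Nat.cast_nonneg _) (Nat.cast_nonneg _)
    (by exact_mod_cast (k i).is_le)⟩

/-- The `N`-th Bernstein approximation of the measure represented by a moment functional. -/
noncomputable def bernsteinMeasure (N : ℕ) : Measure (Fin n → unitInterval) :=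
  ∑ k : Fin n → Fin (N + 1),
    ENNReal.ofReal (bernsteinWeight L N k) • Measure.dirac (gridPoint N k)

instance (N : ℕ) : IsFiniteMeasure (bernsteinMeasure L N) :=
  ⟨by simp [bernsteinMeasure, ENNReal.sum_lt_top]⟩

/-- **Hausdorff moment problem** on the unit cube. -/
theorem exists_measure_of_hausdorff
    (hL : ∀ k m : Fin n → ℕ, 0 ≤ L (∏ i, MvPolynomial.X i ^ k i * (1 - MvPolynomial.X i) ^ m i)) :
    ∃ μ : Measure (Fin n → unitInterval), IsFiniteMeasure μ ∧
      ∀ a : Fin n → ℕ, L (∏ i, MvPolynomial.X i ^ a i) = ∫ t, ∏ i, (t i : ℝ) ^ a i ∂μ := by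
  have hw : ∀ N (k : Fin n → Fin (N + 1)), 0 ≤ bernsteinWeight L N k := fun N k =>
    mul_nonneg (Finset.prod_nonneg fun i _ => Nat.cast_nonneg _)
      (hL (fun i => k i) fun i => N - k i)
  have hint : ∀ (N : ℕ) (f : (Fin n → unitInterval) → ℝ),
      ∫ t, f t ∂bernsteinMeasure L N =
        ∑ k : Fin n → Fin (N + 1), bernsteinWeight L N k * f (gridPoint N k) := by
    intro N f
    rw [bernsteinMeasure, integral_finsetSum_measure]
    · simp [integral_smul_measure, ENNReal.toReal_ofReal (hw N _)]
    · exact fun k _ => (integrable_dirac (by simp)).smul_measure (by simp)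
  have hmass : ∀ N, ∑ k : Fin n → Fin (N + 1), bernsteinWeight L N k = L 1 := fun N => by
    simpa using (sum_bernsteinWeight_mul L (N := N) (a := 0) fun i => Nat.zero_le _).symm
  let ν : ℕ → FiniteMeasure (Fin n → unitInterval) := fun N => ⟨bernsteinMeasure L N, inferInstance⟩
  have hνmass : ∀ N, (ν N).mass ≤ (L 1).toNNReal := by
    intro N
    rw [← NNReal.coe_le_coe]
    refine le_trans (le_of_eq ?_) (Real.le_coe_toNNReal _)
    have h := hint N fun _ => 1
    simp only [integral_const, smul_eq_mul, mul_one, hmass] at h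
    exact h
  obtain ⟨μ, -, hμ⟩ := (isCompact_setOfPred_finiteMeasure_le_of_compactSpace
    (Fin n → unitInterval) (L 1).toNNReal).ultrafilter_le_nhds' ((hyperfilter ℕ).map ν)
      (Ultrafilter.mem_map.2 (Eventually.of_forall hνmass))
  refine ⟨μ, inferInstance, fun a => ?_⟩
  let f : BoundedContinuousFunction (Fin n → unitInterval) ℝ :=
    BoundedContinuousFunction.mkOfCompact ⟨fun t => ∏ i, (t i : ℝ) ^ a i, by fun_prop⟩
  have h1 : Tendsto (fun N => ∫ t, f t ∂bernsteinMeasure L N) (hyperfilter ℕ : Filter ℕ)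
      (𝓝 (∫ t, f t ∂(μ : Measure (Fin n → unitInterval)))) :=
    FiniteMeasure.tendsto_iff_forall_integral_tendsto.1 (show Tendsto ν _ _ from hμ) f
  have h2 : Tendsto (fun N => ∫ t, f t ∂bernsteinMeasure L N) atTop
      (𝓝 (L (∏ i, MvPolynomial.X i ^ a i))) := by
    rw [Metric.tendsto_nhds]
    intro ε hε
    have hL1 : 0 ≤ L 1 := by simpa using hL 0 0
    have hδ : 0 < ε / (L 1 * n + 1) := by positivity
    have hev := eventually_all.2 fun i : Fin n =>
      eventually_abs_choose_div_choose_sub_pow_le (a i) hδ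
    filter_upwards [hev, eventually_all.2 fun i : Fin n => eventually_ge_atTop (a i)]
      with N hN haN
    rw [dist_comm, Real.dist_eq, hint, sum_bernsteinWeight_mul L haN, ← Finset.sum_sub_distrib]
    calc |∑ k : Fin n → Fin (N + 1), (bernsteinWeight L N k *
            ∏ i, ((k i : ℕ).choose (a i) / N.choose (a i) : ℝ) -
              bernsteinWeight L N k * f (gridPoint N k))|
        ≤ ∑ k : Fin n → Fin (N + 1), bernsteinWeight L N k * (n * (ε / (L 1 * n + 1))) := by
          refine (Finset.abs_sum_le_sum_abs _ _).trans (Finset.sum_le_sum fun k _ => ?_)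
          rw [← mul_sub, abs_mul, abs_of_nonneg (hw N k)]
          refine mul_le_mul_of_nonneg_left ?_ (hw N k)
          refine (abs_prod_sub_prod_le_sum Finset.univ _ _
            (fun i => choose_div_choose_mem_Icc (k i).is_le (a i)) (fun i =>
              ⟨pow_nonneg (gridPoint N k i).2.1 _,
                pow_le_one₀ (gridPoint N k i).2.1 (gridPoint N k i).2.2⟩)).trans ?_
          refine (Finset.sum_le_card_nsmul Finset.univ _ (ε / (L 1 * n + 1))
            fun i _ => hN i (k i) (k i).is_le).trans_eq ?_
          simp
      _ = ε * ((L 1 * n) / (L 1 * n + 1)) := by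
          rw [← Finset.sum_mul, hmass]
          ring
      _ < ε := mul_lt_of_lt_one_right hε ((div_lt_one (by positivity)).2 (by linarith))
  exact tendsto_nhds_unique (h2.mono_left Nat.hyperfilter_le_atTop) h1

end HausdorffMoment

section LaplaceTransform

variable {n : ℕ}

lemma MeasureTheory.Measure.ext_of_moments_unitCube {μ ν : Measure (Fin n → unitInterval)}
    [IsFiniteMeasure μ] [IsFiniteMeasure ν]
    (h : ∀ a : Fin n → ℕ, ∫ t, ∏ i, (t i : ℝ) ^ a i ∂μ = ∫ t, ∏ i, (t i : ℝ) ^ a i ∂ν) :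
    μ = ν := by
  let c : Fin n → BoundedContinuousFunction (Fin n → unitInterval) ℝ := fun i =>
    BoundedContinuousFunction.mkOfCompact ⟨fun t => (t i : ℝ), by fun_prop⟩
  let A : StarSubalgebra ℝ (BoundedContinuousFunction (Fin n → unitInterval) ℝ) :=
    { (MvPolynomial.aeval (R := ℝ) c).range with
      star_mem' := fun {f} hf => by
        have : star f = f := by ext; simp
        rwa [this] }
  refine ext_of_forall_mem_subalgebra_integral_eq_of_polish (A := A) ?_ ?_
  · intro s t hst
    obtain ⟨i, hi⟩ := Function.ne_iff.1 hst
    refine ⟨fun t => (t i : ℝ), ⟨(c i).toContinuousMap, ⟨c i, ?_, rfl⟩, rfl⟩, ?_⟩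
    · exact ⟨MvPolynomial.X i, MvPolynomial.aeval_X c i⟩
    · exact fun h => hi (Subtype.ext h)
  · rintro g ⟨P, rfl⟩
    change ∫ t, (MvPolynomial.aeval c P) t ∂μ = ∫ t, (MvPolynomial.aeval c P) t ∂ν
    induction P using MvPolynomial.induction_on' with
    | monomial a r =>
      have : ∀ t, (MvPolynomial.aeval c (MvPolynomial.monomial a r)) t =
          r * ∏ i, (t i : ℝ) ^ a i := by
        intro t
        rw [MvPolynomial.aeval_monomial, Finsupp.prod_fintype _ _ (by simp)]
        simp [BoundedContinuousFunction.coe_prod, c, Algebra.algebraMap_eq_smul_one]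
      simp_rw [this, integral_const_mul, h]
    | add P Q hP hQ =>
      simp only [map_add, BoundedContinuousFunction.coe_add, Pi.add_apply]
      rw [integral_add (BoundedContinuousFunction.integrable _ _)
        (BoundedContinuousFunction.integrable _ _), hP, hQ,
        integral_add (BoundedContinuousFunction.integrable _ _)
        (BoundedContinuousFunction.integrable _ _)]

lemma IsCompletelyMonotone.exists_measure_lattice {G : (Fin n → ℝ) → ℝ}
    (hG : IsCompletelyMonotone n G) {h : ℝ} (hh : 0 ≤ h) :
    ∃ μ : Measure (Fin n → unitInterval), IsFiniteMeasure μ ∧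
      ∀ a : Fin n → ℕ, G (fun i => a i * h) = ∫ t, ∏ i, (t i : ℝ) ^ a i ∂μ := by
  obtain ⟨μ, hμ, hL⟩ := exists_measure_of_hausdorff (latticeFunctional n h G)
    (latticeFunctional_nonneg hh hG)
  refine ⟨μ, hμ, fun a => ?_⟩
  rw [← hL, show ∏ i, (MvPolynomial.X i : MvPolynomial (Fin n) ℝ) ^ a i =
    MvPolynomial.monomial (Finsupp.equivFunOnFinite.symm a) 1 by
      rw [MvPolynomial.monomial_eq, Finsupp.prod_fintype _ _ (by simp)]; simp,
    latticeFunctional_monomial]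
  simp

lemma IsCompletelyMonotone.exists_measure_rational {G : (Fin n → ℝ) → ℝ}
    (hG : IsCompletelyMonotone n G) :
    ∃ μ : Measure (Fin n → unitInterval), IsFiniteMeasure μ ∧
      ∀ (a : Fin n → ℕ) (m : ℕ), 0 < m →
        G (fun i => a i / m) = ∫ t, ∏ i, (t i : ℝ) ^ (a i / m : ℝ) ∂μ := by
  obtain ⟨μ, hμ, hmom⟩ := hG.exists_measure_lattice zero_le_one
  refine ⟨μ, hμ, fun a m hm => ?_⟩
  have hm' : (m : ℝ) ≠ 0 := by exact_mod_cast hm.ne'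
  obtain ⟨ν, hν, hmomν⟩ := hG.exists_measure_lattice (h := (m : ℝ)⁻¹) (by positivity)
  have hcont : Continuous fun (t : Fin n → unitInterval) i => t i ^ m := by fun_prop
  have hmap : ν.map (fun t i => t i ^ m) = μ := by
    refine Measure.ext_of_moments_unitCube fun b => ?_
    rw [← hmom b, integral_map hcont.aemeasurable
      (Measurable.aestronglyMeasurable (by fun_prop))]
    have h1 := hmomν fun i => m * b i
    simp only [pow_mul, Nat.cast_mul, mul_one] at h1 ⊢
    simp only [Set.Icc.coe_pow]
    rw [← h1]
    congr 1
    funext i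
    field_simp
  have hrpow : Measurable fun t : Fin n → unitInterval => ∏ i, (t i : ℝ) ^ (a i / m : ℝ) := by
    fun_prop
  rw [← hmap, integral_map hcont.aemeasurable hrpow.aestronglyMeasurable]
  have h1 := hmomν a
  simp only [← div_eq_mul_inv] at h1
  rw [h1]
  congr 1
  funext t
  refine Finset.prod_congr rfl fun i _ => ?_
  rw [Set.Icc.coe_pow, ← Real.rpow_natCast (t i : ℝ) m, ← Real.rpow_mul (t i).2.1,
    mul_div_cancel₀ _ hm', Real.rpow_natCast]

lemma prod_rpow_mem_Icc {p : Fin n → ℝ} (hp : ∀ i, 0 ≤ p i) (t : Fin n → unitInterval) :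
    ∏ i, (t i : ℝ) ^ p i ∈ Set.Icc (0 : ℝ) 1 :=
  ⟨Finset.prod_nonneg fun i _ => Real.rpow_nonneg (t i).2.1 _,
    Finset.prod_le_one (fun i _ => Real.rpow_nonneg (t i).2.1 _)
      fun i _ => Real.rpow_le_one (t i).2.1 (t i).2.2 (hp i)⟩

lemma integrable_prod_rpow (μ : Measure (Fin n → unitInterval)) [IsFiniteMeasure μ]
    {p : Fin n → ℝ} (hp : ∀ i, 0 ≤ p i) :
    Integrable (fun t : Fin n → unitInterval => ∏ i, (t i : ℝ) ^ p i) μ := by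
  refine Integrable.of_bound (Measurable.aestronglyMeasurable (by fun_prop)) 1
    (ae_of_all _ fun t => ?_)
  rw [Real.norm_eq_abs, abs_of_nonneg (prod_rpow_mem_Icc hp t).1]
  exact (prod_rpow_mem_Icc hp t).2

lemma ae_ne_zero_of_continuousWithinAt {G : (Fin n → ℝ) → ℝ}
    (hG : ContinuousWithinAt G {p : Fin n → ℝ | ∀ i, 0 ≤ p i} 0)
    (μ : Measure (Fin n → unitInterval)) [IsFiniteMeasure μ]
    (h : ∀ (a : Fin n → ℕ) (m : ℕ), 0 < m →
        G (fun i => a i / m) = ∫ t, ∏ i, (t i : ℝ) ^ (a i / m : ℝ) ∂μ) (i : Fin n) :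
    ∀ᵐ t ∂μ, t i ≠ 0 := by
  have hs : MeasurableSet {t : Fin n → unitInterval | t i = 0} :=
    measurableSet_eq_fun (measurable_pi_apply i) measurable_const
  let e : Fin n → ℕ := Pi.single i 1
  have hlim : Tendsto (fun m : ℕ => G 0 - G fun j => e j / m) atTop (𝓝 (G 0 - G 0)) := by
    refine tendsto_const_nhds.sub (hG.tendsto.comp (tendsto_nhdsWithin_iff.2 ⟨?_, ?_⟩))
    · exact tendsto_pi_nhds.2 fun j => tendsto_const_div_atTop_nhds_zero_nat _
    · exact Eventually.of_forall fun m j => by positivity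
  have hle : ∀ᶠ m : ℕ in atTop,
      μ.real {t : Fin n → unitInterval | t i = 0} ≤ G 0 - G fun j => e j / m := by
    filter_upwards [eventually_gt_atTop 0] with m hm
    have hm' : (0 : ℝ) < m := by exact_mod_cast hm
    have hnn : ∀ j, (0 : ℝ) ≤ e j / m := fun j => by positivity
    have h0 := h 0 1 one_pos
    have hG0 : G 0 = ∫ _, (1 : ℝ) ∂μ := by
      simpa [← Pi.zero_def] using h0
    rw [h e m hm, hG0, ← integral_sub (integrable_const _) (integrable_prod_rpow μ hnn),
      ← integral_indicator_one hs]
    refine integral_mono ((integrable_const (1 : ℝ)).indicator hs)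
      ((integrable_const _).sub (integrable_prod_rpow μ hnn)) fun t => ?_
    by_cases ht : t i = 0
    · have : ∏ j, (t j : ℝ) ^ (e j / m : ℝ) = 0 := by
        refine Finset.prod_eq_zero (Finset.mem_univ i) ?_
        rw [ht]
        simp [e, Real.zero_rpow, hm'.ne']
      simp [Set.indicator, ht, this]
    · simpa [Set.indicator, ht] using (prod_rpow_mem_Icc hnn t).2
  have hzero : μ.real {t : Fin n → unitInterval | t i = 0} ≤ 0 := by
    simpa using ge_of_tendsto hlim hle
  have := (measureReal_eq_zero_iff).1 (le_antisymm hzero measureReal_nonneg)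
  simpa [ae_iff] using this

lemma IsCompletelyMonotone.exists_measure_unitCube {G : (Fin n → ℝ) → ℝ}
    (hG : IsCompletelyMonotone n G) :
    ∃ μ : Measure (Fin n → unitInterval), IsFiniteMeasure μ ∧ (∀ᵐ t ∂μ, ∀ i, t i ≠ 0) ∧
      ∀ p : Fin n → ℝ, (∀ i, 0 ≤ p i) → G p = ∫ t, ∏ i, (t i : ℝ) ^ p i ∂μ := by
  obtain ⟨μ, hμ, h⟩ := hG.exists_measure_rational
  have hne : ∀ᵐ t ∂μ, ∀ i, t i ≠ 0 := ae_all_iff.2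
    (ae_ne_zero_of_continuousWithinAt (hG.continuousOn 0 fun _ => le_rfl) μ h)
  refine ⟨μ, hμ, hne, fun p hp => ?_⟩
  let q : ℕ → Fin n → ℝ := fun m i => (⌊p i * m⌋₊ : ℝ) / m
  have hq0 : ∀ m i, 0 ≤ q m i := fun m i => by positivity
  have hq : Tendsto q atTop (𝓝 p) := tendsto_pi_nhds.2 fun i =>
    (tendsto_nat_floor_mul_div_atTop (hp i)).comp tendsto_natCast_atTop_atTop
  have h1 : Tendsto (fun m => G (q m)) atTop (𝓝 (G p)) :=
    (hG.continuousOn p hp).tendsto.comp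
      (tendsto_nhdsWithin_iff.2 ⟨hq, Eventually.of_forall hq0⟩)
  have h2 : Tendsto (fun m => ∫ t, ∏ i, (t i : ℝ) ^ q m i ∂μ) atTop
      (𝓝 (∫ t, ∏ i, (t i : ℝ) ^ p i ∂μ)) := by
    refine tendsto_integral_of_dominated_convergence (fun _ => 1)
      (fun m => (integrable_prod_rpow μ (hq0 m)).aestronglyMeasurable) (integrable_const _)
      (fun m => ae_of_all _ fun t => ?_) ?_
    · rw [Real.norm_eq_abs, abs_of_nonneg (prod_rpow_mem_Icc (hq0 m) t).1]
      exact (prod_rpow_mem_Icc (hq0 m) t).2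
    · filter_upwards [hne] with t ht
      refine tendsto_finsetProd _ fun i _ => ?_
      exact tendsto_const_nhds.rpow (tendsto_pi_nhds.1 hq i)
        (Or.inl fun h0 => ht i (Subtype.ext h0))
  refine tendsto_nhds_unique (h1.congr' ?_) h2
  filter_upwards [eventually_gt_atTop 0] with m hm using h _ m hm

/-- The map `x ↦ exp (-x)` from the orthant to the unit cube, in each coordinate. -/
noncomputable def expNegCube (n : ℕ) (x : Fin n → ℝ) : Fin n → unitInterval :=
  fun i => Set.projIcc 0 1 zero_le_one (Real.exp (-x i))

lemma measurable_expNegCube : Measurable (expNegCube n) :=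
  (by unfold expNegCube; fun_prop : Continuous (expNegCube n)).measurable

lemma coe_expNegCube {x : Fin n → ℝ} {i : Fin n} (hx : 0 ≤ x i) :
    (expNegCube n x i : ℝ) = Real.exp (-x i) := by
  rw [expNegCube, Set.projIcc_of_mem zero_le_one
    ⟨(Real.exp_pos _).le, Real.exp_le_one_iff.2 (by linarith)⟩]

lemma measurable_neg_log_cube :
    Measurable fun (t : Fin n → unitInterval) i => -Real.log (t i) := by
  fun_prop

lemma map_neg_log_map_expNegCube {μ : Measure (Fin n → ℝ)}
    (hμ : ∀ᵐ x ∂μ, ∀ i, 0 ≤ x i) :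
    (μ.map (expNegCube n)).map (fun t i => -Real.log (t i)) = μ := by
  rw [Measure.map_map measurable_neg_log_cube measurable_expNegCube]
  conv_rhs => rw [← Measure.map_id (μ := μ)]
  refine Measure.map_congr ?_
  filter_upwards [hμ] with x hx
  funext i
  simp [coe_expNegCube (hx i)]

/-- A finite measure on the closed orthant is determined by its Laplace transform. -/
theorem MeasureTheory.Measure.ext_of_laplaceTransform {μ ν : Measure (Fin n → ℝ)}
    [IsFiniteMeasure μ] [IsFiniteMeasure ν] (hμ : ∀ᵐ x ∂μ, ∀ i, 0 ≤ x i)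
    (hν : ∀ᵐ x ∂ν, ∀ i, 0 ≤ x i)
    (h : ∀ p : Fin n → ℝ, (∀ i, 0 ≤ p i) →
      ∫ x, Real.exp (-∑ i, p i * x i) ∂μ = ∫ x, Real.exp (-∑ i, p i * x i) ∂ν) :
    μ = ν := by
  have hmom : ∀ (ρ : Measure (Fin n → ℝ)), (∀ᵐ x ∂ρ, ∀ i, 0 ≤ x i) → ∀ a : Fin n → ℕ,
      ∫ t, ∏ i, (t i : ℝ) ^ a i ∂(ρ.map (expNegCube n)) =
        ∫ x, Real.exp (-∑ i, (a i : ℝ) * x i) ∂ρ := by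
    intro ρ hρ a
    rw [integral_map measurable_expNegCube.aemeasurable
      (Measurable.aestronglyMeasurable (by fun_prop))]
    refine integral_congr_ae ?_
    filter_upwards [hρ] with x hx
    rw [← Finset.sum_neg_distrib, Real.exp_sum]
    refine Finset.prod_congr rfl fun i _ => ?_
    rw [coe_expNegCube (hx i), ← Real.exp_nat_mul, mul_neg]
  have hmap : μ.map (expNegCube n) = ν.map (expNegCube n) :=
    Measure.ext_of_moments_unitCube fun a => by
      rw [hmom μ hμ, hmom ν hν, h _ fun i => Nat.cast_nonneg _]
  rw [← map_neg_log_map_expNegCube hμ, hmap, map_neg_log_map_expNegCube hν]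

/-- Existence in the **Bernstein–Hausdorff–Widder theorem** on the orthant. -/
theorem IsCompletelyMonotone.exists_measure {G : (Fin n → ℝ) → ℝ}
    (hG : IsCompletelyMonotone n G) :
    ∃ μ : Measure (Fin n → ℝ), IsFiniteMeasure μ ∧ (∀ᵐ x ∂μ, ∀ i, 0 ≤ x i) ∧
      ∀ p : Fin n → ℝ, (∀ i, 0 ≤ p i) → G p = ∫ x, Real.exp (-∑ i, p i * x i) ∂μ := by
  obtain ⟨μ, hμ, hne, h⟩ := hG.exists_measure_unitCube
  refine ⟨μ.map fun t i => -Real.log (t i), inferInstance, ?_, fun p hp => ?_⟩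
  · have hs : MeasurableSet {x : Fin n → ℝ | ∀ i, 0 ≤ x i} := by
      simp only [Set.ofPred_forall]
      exact MeasurableSet.iInter fun i => measurableSet_le measurable_const (measurable_pi_apply i)
    rw [ae_map_iff measurable_neg_log_cube.aemeasurable hs]
    exact ae_of_all _ fun t i => neg_nonneg.2 (Real.log_nonpos (t i).2.1 (t i).2.2)
  · rw [h p hp, integral_map measurable_neg_log_cube.aemeasurable
      (Measurable.aestronglyMeasurable (by fun_prop))]
    refine integral_congr_ae ?_
    filter_upwards [hne] with t ht
    rw [← Finset.sum_neg_distrib, Real.exp_sum]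
    refine Finset.prod_congr rfl fun i _ => ?_
    have hpos : (0 : ℝ) < t i := lt_of_le_of_ne (t i).2.1 fun h0 => ht i (Subtype.ext h0.symm)
    rw [Real.rpow_def_of_pos hpos]
    congr 1
    ring

end LaplaceTransform

/-- Bernstein–Hilbert theorem: a bounded, completely monotone function on the positive
orthant is the Laplace transform of a unique finite nonnegative Borel measure supported
in the orthant. -/
theorem stmt19 (n : ℕ) (F : (Fin n → ℝ) → ℝ)
    (hbdd : ∃ C : ℝ, ∀ p : Fin n → ℝ, (∀ i, 0 ≤ p i) → |F p| ≤ C)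
    (hcont : ContinuousOn F {p : Fin n → ℝ | ∀ i, 0 ≤ p i})
    (hsmooth : ContDiffOn ℝ (⊤ : ℕ∞) F {p : Fin n → ℝ | ∀ i, 0 < p i})
    (hcm : ∀ l : List (Fin n), ∀ p : Fin n → ℝ, (∀ i, 0 < p i) →
      0 ≤ (-1 : ℝ) ^ l.length * (l.foldr (pderiv' n) F) p) :
    ∃! μ : Measure (Fin n → ℝ),
      IsFiniteMeasure μ ∧ μ {x | ¬ ∀ i, 0 ≤ x i} = 0 ∧
      ∀ p : Fin n → ℝ, (∀ i, 0 ≤ p i) →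
        F p = ∫ x, Real.exp (-∑ i, p i * x i) ∂μ := by
  have hF : IsCompletelyMonotone n F := ⟨hcont, hsmooth, hcm⟩
  obtain ⟨μ, hμ, hsupp, h⟩ := hF.exists_measure
  refine ⟨μ, ⟨hμ, ae_iff.1 hsupp, h⟩, ?_⟩
  rintro ν ⟨hν, hsuppν, hν'⟩
  exact Measure.ext_of_laplaceTransform (ae_iff.2 hsuppν) hsupp fun p hp => by
    rw [← hν' p hp, ← h p hp]
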